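/- Let Δ ⊂ ℝⁿ be a simple polytope. A facet F_i of Δ is flat (i.e. there is a hyperplane in the dual space containing the conormal of every other facet meeting F_i) if and only if the volume V(κ) of Δ(κ) is an affine-linear function of the support number κ_i on the chamber C_Δ. -/

import Mathlib

open MeasureTheory Function Set

noncomputable section

namespace MassLinearPaper

def dotp {n : ℕ} (v x : Fin n → ℝ) : ℝ := ∑ j, v j * x j

def polytope {n N : ℕ} (η : Fin N → Fin n → ℝ) (κ : Fin N → ℝ) : Set (Fin n → ℝ) :=
  {x | ∀ i, dotp (η i) x ≤ κ i}

def facet {n N : ℕ} (η : Fin N → Fin n → ℝ) (κ : Fin N → ℝ) (i : Fin N) : Set (Fin n → ℝ) :=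
  {x ∈ polytope η κ | dotp (η i) x = κ i}

/-- A polytope is simple if at each point the active conormals are linearly independent. -/
def IsSimplePoly {n N : ℕ} (η : Fin N → Fin n → ℝ) (κ : Fin N → ℝ) : Prop :=
  ∀ x ∈ polytope η κ,
    LinearIndependent ℝ (fun i : {i : Fin N // dotp (η i) x = κ i} => η i.1)

/-- Two support vectors give analogous polytopes: the same collections of facets intersect. -/
def Analogous {n N : ℕ} (η : Fin N → Fin n → ℝ) (κ κ' : Fin N → ℝ) : Prop :=
  ∀ I : Finset (Fin N),
    (⋂ i ∈ I, facet η κ' i).Nonempty ↔ (⋂ i ∈ I, facet η κ i).Nonempty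

/-- The chamber of Δ(κ). -/
def chamber {n N : ℕ} (η : Fin N → Fin n → ℝ) (κ : Fin N → ℝ) : Set (Fin N → ℝ) :=
  connectedComponentIn {κ' | IsSimplePoly η κ' ∧ Analogous η κ κ'} κ

/-- Standing hypotheses: simple, bounded, nonempty interior, all facets nonempty. -/
def GoodPolytope {n N : ℕ} (η : Fin N → Fin n → ℝ) (κ : Fin N → ℝ) : Prop :=
  IsSimplePoly η κ ∧ Bornology.IsBounded (polytope η κ) ∧
    (interior (polytope η κ)).Nonempty ∧ ∀ i, (facet η κ i).Nonempty

/-- The center of mass of Δ(κ). -/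
def centroid {n N : ℕ} (η : Fin N → Fin n → ℝ) (κ : Fin N → ℝ) : Fin n → ℝ :=
  ⨍ x in polytope η κ, x

/-- The volume of Δ(κ) as a function of κ. -/
def volFn {n N : ℕ} (η : Fin N → Fin n → ℝ) : (Fin N → ℝ) → ℝ :=
  fun κ => (volume (polytope η κ)).toReal

/-- Partial derivative with respect to the i-th support number. -/
def pd {N : ℕ} (i : Fin N) (f : (Fin N → ℝ) → ℝ) : (Fin N → ℝ) → ℝ :=
  fun κ => fderiv ℝ f κ (Pi.single i 1)

def face {n N : ℕ} (η : Fin N → Fin n → ℝ) (κ : Fin N → ℝ) (S : Finset (Fin N)) :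
    Set (Fin n → ℝ) :=
  ⋂ i ∈ S, facet η κ i

/-- Centroid of a face with respect to Hausdorff measure of the appropriate dimension. -/
def faceCentroid {n N : ℕ} (η : Fin N → Fin n → ℝ) (κ : Fin N → ℝ) (S : Finset (Fin N)) :
    Fin n → ℝ :=
  ⨍ x in face η κ S, x ∂(μH[(n : ℝ) - S.card])

/-- The facet `F i` is H-symmetric: `⟨H, c(κ)⟩` does not depend on `κ i` on the chamber. -/
def SymmFacet {n N : ℕ} (η : Fin N → Fin n → ℝ) (κ : Fin N → ℝ) (H : Fin n → ℝ)
    (i : Fin N) : Prop :=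
  ∀ κ₁ ∈ chamber η κ, ∀ κ₂ ∈ chamber η κ, (∀ j, j ≠ i → κ₁ j = κ₂ j) →
    dotp H (centroid η κ₁) = dotp H (centroid η κ₂)

/-- H is mass linear with coefficients γ and constant C. -/
def MassLinear {n N : ℕ} (η : Fin N → Fin n → ℝ) (κ : Fin N → ℝ) (H : Fin n → ℝ)
    (γ : Fin N → ℝ) (C : ℝ) : Prop :=
  ∀ κ' ∈ chamber η κ, dotp H (centroid η κ') = ∑ i, γ i * κ' i + C

/-- A facet is pervasive if it meets every other facet. -/
def Pervasive {n N : ℕ} (η : Fin N → Fin n → ℝ) (κ : Fin N → ℝ) (i : Fin N) : Prop :=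
  ∀ j, j ≠ i → (facet η κ i ∩ facet η κ j).Nonempty

/-- A facet is flat if the conormals of all other facets meeting it lie in a hyperplane. -/
def FlatFacet {n N : ℕ} (η : Fin N → Fin n → ℝ) (κ : Fin N → ℝ) (i : Fin N) : Prop :=
  ∃ ξ : Fin n → ℝ, ξ ≠ 0 ∧
    ∀ j, j ≠ i → (facet η κ i ∩ facet η κ j).Nonempty → dotp (η j) ξ = 0

/-- Equivalence of facets, via the criterion of Lemma 4.4. -/
def FacetEquiv {n N : ℕ} (η : Fin N → Fin n → ℝ) (i j : Fin N) : Prop :=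
  i = j ∨ ∃ ξ : Fin n → ℝ, dotp (η i) ξ = 1 ∧ dotp (η j) ξ = -1 ∧
    ∀ k, k ≠ i → k ≠ j → dotp (η k) ξ = 0

def IsEquivClass {n N : ℕ} (η : Fin N → Fin n → ℝ) (I : Finset (Fin N)) : Prop :=
  I.Nonempty ∧ (∀ i ∈ I, ∀ j ∈ I, FacetEquiv η i j) ∧
    ∀ i ∈ I, ∀ j, FacetEquiv η i j → j ∈ I

/-- H is inessential. -/
def Inessential {n N : ℕ} (η : Fin N → Fin n → ℝ) (H : Fin n → ℝ) : Prop :=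
  ∃ β : Fin N → ℝ, H = ∑ i, β i • η i ∧
    ∀ I : Finset (Fin N), IsEquivClass η I → ∑ i ∈ I, β i = 0

end MassLinearPaper

open MassLinearPaper

/-!
Raising the support number `κ i` from `s` to `t` adds to the polytope the slab
`s < ⟨η i, x⟩ ≤ t` of the polyhedron in which the inequality of `F_i` is dropped.

If `F_i` is flat, let `ξ` be annihilated by the conormals of the facets meeting `F_i`, normalised to
`⟨η i, ξ⟩ = 1`. As long as the combinatorial type does not change, only the facets meeting `F_i` cut
the slab, so it is a slab of a set invariant under translation by `ξ`. Its volume is therefore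
proportional to `t - s`.

Conversely, let `ξ` be dual to `η i` at a vertex of `F_i`: the other conormals active there
annihilate it. Consider an edge of `F_i` from a vertex with this property, lying on the facets
`F_j` with `j ∈ I`. Taking differences in the support numbers of the `F_j`, `j ≠ i`, localises
the affinity of the volume to a box on which every `⟨η j, x⟩`, `j ∈ I`, exceeds `κ j` by at most
`ε`, and there only the two facets at the ends of the edge cut. Translation by `ε • ξ` compares
the boxes at heights `κ i` and `κ i + ε`. It moves only the facet `F_b` at the far end, so the
equality of the volumes forces `⟨η b, ξ⟩ = 0`, and `ξ` is still dual to `η i` at the far vertex.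
Walking along the edges of `F_i` that increase `⟨η b, x⟩`, as in the simplex method, leads to a
vertex on `F_b`, for every facet `F_b` meeting `F_i`.
-/

namespace MassLinearPaper

open scoped Topology Finset

lemma forall_mem_insert_le_update_iff {α ι : Type*} [DecidableEq ι] {f : ι → α → ℝ} {j : ι}
    {J : Finset ι} (hj : j ∉ J) {c : ι → ℝ} {t : ℝ} {x : α} :
    (∀ l ∈ insert j J, f l x ≤ update c j t l) ↔ f j x ≤ t ∧ ∀ l ∈ J, f l x ≤ c l := by
  rw [Finset.forall_mem_insert, update_self, and_congr_right_iff]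
  refine fun _ => forall₂_congr fun l hl => ?_
  rw [update_of_ne (ne_of_mem_of_not_mem hl hj)]

section Measure

variable {α ι : Type*} [MeasurableSpace α]

lemma measureReal_restrict_preimage_Ioc [DecidableEq ι] {μ : Measure α} {f : ι → α → ℝ}
    (hf : ∀ j, Measurable (f j)) {j : ι} {J : Finset ι} (hj : j ∉ J) {c : ι → ℝ} {s t : ℝ}
    (hst : s ≤ t) (hμ : μ {x | ∀ l ∈ insert j J, f l x ≤ update c j t l} ≠ ⊤) :
    (μ.restrict (f j ⁻¹' Ioc s t)).real {x | ∀ l ∈ J, f l x ≤ c l} =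
      μ.real {x | ∀ l ∈ insert j J, f l x ≤ update c j t l} -
        μ.real {x | ∀ l ∈ insert j J, f l x ≤ update c j s l} := by
  have hmeas : MeasurableSet {x | ∀ l ∈ insert j J, f l x ≤ update c j s l} := by
    simp only [ofPred_forall]
    exact (insert j J).measurableSet_biInter fun l _ => measurableSet_le (hf l) measurable_const
  simp only [forall_mem_insert_le_update_iff hj] at hμ hmeas ⊢
  rw [measureReal_restrict_apply' (hf j measurableSet_Ioc),
    ← measureReal_sdiff (ofPred_subset_ofPred.2 fun x hx => ⟨hx.1.trans hst, hx.2⟩) hmeas hμ]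
  congr 1
  ext x
  simp only [mem_inter_iff, mem_sdiff, mem_ofPred_eq, mem_preimage, mem_Ioc, ← not_le]
  tauto

lemma measureReal_forall_mem_Ioc_eq {μ ν : Measure α} {f : ι → α → ℝ}
    (hf : ∀ j, Measurable (f j)) {a b : ι → ℝ} (hab : a ≤ b) {J : Finset ι}
    (hμ : μ {x | ∀ j ∈ J, f j x ≤ b j} ≠ ⊤) (hν : ν {x | ∀ j ∈ J, f j x ≤ b j} ≠ ⊤)
    (h : ∀ c ∈ Icc a b,
      μ.real {x | ∀ j ∈ J, f j x ≤ c j} = ν.real {x | ∀ j ∈ J, f j x ≤ c j}) :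
    μ.real {x | ∀ j ∈ J, f j x ∈ Ioc (a j) (b j)} =
      ν.real {x | ∀ j ∈ J, f j x ∈ Ioc (a j) (b j)} := by
  classical
  induction J using Finset.induction_on generalizing μ ν with
  | empty => simpa using h a (left_mem_Icc.2 hab)
  | insert j J hj ih =>
    have hbox : {x | ∀ l ∈ insert j J, f l x ∈ Ioc (a l) (b l)} =
        {x | ∀ l ∈ J, f l x ∈ Ioc (a l) (b l)} ∩ f j ⁻¹' Ioc (a j) (b j) := by
      ext x
      simp only [Finset.forall_mem_insert]
      exact and_comm
    have hupdate {c : ι → ℝ} (hc : c ∈ Icc a b) {t : ℝ} (ht : t ∈ Icc (a j) (b j)) :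
        update c j t ∈ Icc a b :=
      ⟨le_update_iff.2 ⟨ht.1, fun l _ => hc.1 l⟩, update_le_iff.2 ⟨ht.2, fun l _ => hc.2 l⟩⟩
    have hfin {ρ : Measure α} (hρ : ρ {x | ∀ l ∈ insert j J, f l x ≤ b l} ≠ ⊤) {c : ι → ℝ}
        (hc : c ≤ b) : ρ {x | ∀ l ∈ insert j J, f l x ≤ c l} ≠ ⊤ :=
      ne_top_of_le_ne_top hρ (measure_mono fun x hx l hl => (hx l hl).trans (hc l))
    have hrestrict {ρ : Measure α} (hρ : ρ {x | ∀ l ∈ insert j J, f l x ≤ b l} ≠ ⊤) :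
        (ρ.restrict (f j ⁻¹' Ioc (a j) (b j))) {x | ∀ l ∈ J, f l x ≤ b l} ≠ ⊤ := by
      rw [Measure.restrict_apply' (hf j measurableSet_Ioc)]
      refine ne_top_of_le_ne_top hρ (measure_mono fun x hx => ?_)
      exact (Finset.forall_mem_insert _ _ _).2 ⟨hx.2.2, hx.1⟩
    rw [hbox, ← measureReal_restrict_apply' (hf j measurableSet_Ioc),
      ← measureReal_restrict_apply' (hf j measurableSet_Ioc)]
    refine ih (hrestrict hμ) (hrestrict hν) fun c hc => ?_
    have hbj := hupdate hc (right_mem_Icc.2 (hab j))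
    rw [measureReal_restrict_preimage_Ioc hf hj (hab j) (hfin hμ hbj.2),
      measureReal_restrict_preimage_Ioc hf hj (hab j) (hfin hν hbj.2), h _ hbj,
      h _ (hupdate hc (left_mem_Icc.2 (hab j)))]

lemma measureReal_lt_of_sdiff_mem_nhds [TopologicalSpace α] [OpensMeasurableSpace α]
    {μ : Measure α} [μ.IsOpenPosMeasure] {s t : Set α} {x : α} (hst : s ⊆ t)
    (hx : t \ s ∈ 𝓝 x) (ht : μ t ≠ ⊤) : μ.real s < μ.real t := by
  have hsub : interior (t \ s) ⊆ t \ s := interior_subset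
  have hpos : 0 < μ.real (interior (t \ s)) := by
    refine ENNReal.toReal_pos (Measure.measure_pos_of_mem_nhds μ (interior_mem_nhds.2 hx)).ne' ?_
    exact ne_top_of_le_ne_top ht (measure_mono (hsub.trans sdiff_subset))
  have hs : μ s ≠ ⊤ := ne_top_of_le_ne_top ht (measure_mono hst)
  calc μ.real s < μ.real s + μ.real (interior (t \ s)) := lt_add_of_pos_right _ hpos
    _ = μ.real (s ∪ interior (t \ s)) :=
      (measureReal_union (disjoint_sdiff_right.mono_right hsub) isOpen_interior.measurableSet hs
        (ne_top_of_le_ne_top ht (measure_mono (hsub.trans sdiff_subset)))).symm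
    _ ≤ μ.real t := measureReal_mono (union_subset hst (hsub.trans sdiff_subset)) ht

end Measure

lemma measureReal_inter_preimage_Ioc {E : Type*} [NormedAddCommGroup E] [NormedSpace ℝ E]
    [FiniteDimensional ℝ E] [MeasurableSpace E] [BorelSpace E] (μ : Measure E)
    [μ.IsAddHaarMeasure] {φ : Module.Dual ℝ E} {ξ : E} (hφ : φ ξ = 1) {A : Set E}
    (hA : ∀ x (c : ℝ), x + c • ξ ∈ A ↔ x ∈ A) {s t : ℝ} (hst : s ≤ t) :
    μ.real (A ∩ φ ⁻¹' Ioc s t) = (t - s) * μ.real (A ∩ φ ⁻¹' Ioc 0 1) := by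
  obtain rfl | hlt := hst.eq_or_lt
  · simp
  have hpos : 0 < t - s := sub_pos.2 hlt
  let f : E →ₗ[ℝ] E := LinearMap.transvection φ ((t - s - 1) • ξ)
  have hf (x : E) : f x = x + ((t - s - 1) * φ x) • ξ := by
    simp only [f, LinearMap.transvection.apply, smul_smul, mul_comm]
  have hdet : LinearMap.det f = t - s := by
    rw [LinearMap.transvection.det, map_smul, hφ, smul_eq_mul]
    ring
  have hpre : f ⁻¹' ((· + s • ξ) ⁻¹' (A ∩ φ ⁻¹' Ioc s t)) = A ∩ φ ⁻¹' Ioc 0 1 := by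
    ext x
    have hφx : φ (f x + s • ξ) = (t - s) * φ x + s := by
      simp only [hf, map_add, map_smul, hφ, smul_eq_mul]
      ring
    simp only [mem_preimage, mem_inter_iff, hA, hφx, mem_Ioc]
    rw [hf, hA, lt_add_iff_pos_left, mul_pos_iff_of_pos_left hpos, ← le_sub_iff_add_le,
      mul_le_iff_le_one_right hpos]
  rw [← hpre, measureReal_def μ (f ⁻¹' _), Measure.addHaar_preimage_linearMap μ (hdet ▸ hpos.ne'),
    measure_preimage_add_right, hdet, abs_of_pos (inv_pos.2 hpos), ENNReal.toReal_mul,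
    ENNReal.toReal_ofReal (inv_pos.2 hpos).le, mul_inv_cancel_left₀ hpos.ne', measureReal_def]

section LinearAlgebra

variable {n : ℕ} {ι : Type*} {v : ι → Fin n → ℝ} {I : Finset ι}

lemma dotp_add (v x y : Fin n → ℝ) : dotp v (x + y) = dotp v x + dotp v y :=
  dotProduct_add v x y

lemma dotp_sub (v x y : Fin n → ℝ) : dotp v (x - y) = dotp v x - dotp v y :=
  dotProduct_sub v x y

lemma dotp_smul (v : Fin n → ℝ) (c : ℝ) (x : Fin n → ℝ) : dotp v (c • x) = c * dotp v x :=
  dotProduct_smul c v x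

lemma dotp_zero (v : Fin n → ℝ) : dotp v 0 = 0 :=
  dotProduct_zero v

lemma dotp_sum {κ : Type*} (v : Fin n → ℝ) (s : Finset κ) (f : κ → Fin n → ℝ) :
    dotp v (∑ k ∈ s, f k) = ∑ k ∈ s, dotp v (f k) :=
  dotProduct_sum v s f

@[fun_prop]
lemma continuous_dotp (v : Fin n → ℝ) : Continuous (dotp v) := by
  unfold dotp
  fun_prop

lemma surjective_mulVecLin_of_linearIndepOn (hI : LinearIndepOn ℝ v I) :
    Surjective (Matrix.of fun j : I => v j).mulVecLin := by
  rw [← LinearMap.range_eq_top]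
  apply Submodule.eq_top_of_finrank_eq
  rw [Module.finrank_fintype_fun_eq_card]
  exact LinearIndependent.rank_matrix hI

lemma exists_linearMap_dotp_eq (hI : LinearIndepOn ℝ v I) :
    ∃ L : (ι → ℝ) →ₗ[ℝ] (Fin n → ℝ), ∀ c, ∀ j ∈ I, dotp (v j) (L c) = c j := by
  obtain ⟨R, hR⟩ := LinearMap.exists_rightInverse_of_surjective _
    (LinearMap.range_eq_top.2 (surjective_mulVecLin_of_linearIndepOn hI))
  refine ⟨R ∘ₗ LinearMap.funLeft ℝ ℝ Subtype.val, fun c j hj => ?_⟩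
  exact congrFun (LinearMap.congr_fun hR (c ∘ Subtype.val)) ⟨j, hj⟩

lemma card_le_of_linearIndepOn (hI : LinearIndepOn ℝ v I) : #I ≤ n := by
  simpa using LinearIndependent.fintype_card_le_finrank hI

lemma card_eq_iff_forall_dotp_eq_zero (hI : LinearIndepOn ℝ v I) :
    #I = n ↔ ∀ x, (∀ j ∈ I, dotp (v j) x = 0) → x = 0 := by
  have hsurj := surjective_mulVecLin_of_linearIndepOn hI
  trans Injective (Matrix.of fun j : I => v j).mulVecLin
  · refine ⟨fun h => ?_, fun h => ?_⟩
    · exact (LinearMap.injective_iff_surjective_of_finrank_eq_finrank (by simp [h])).2 hsurj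
    · simpa using (LinearEquiv.ofBijective _ ⟨h, hsurj⟩).finrank_eq.symm
  · rw [injective_iff_map_eq_zero]
    refine forall_congr' fun x => imp_congr_left ?_
    rw [funext_iff, Subtype.forall]
    rfl

end LinearAlgebra

section Polytope

variable {n N : ℕ} {η : Fin N → Fin n → ℝ} {κ κ' : Fin N → ℝ} {I : Finset (Fin N)} {i : Fin N}
  {x e : Fin n → ℝ}

/-- The indices of the facet hyperplanes passing through `x`. -/
def activeSet (η : Fin N → Fin n → ℝ) (κ : Fin N → ℝ) (x : Fin n → ℝ) : Finset (Fin N) :=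
  {l | dotp (η l) x = κ l}

lemma mem_activeSet : i ∈ activeSet η κ x ↔ dotp (η i) x = κ i :=
  Finset.mem_filter_univ i

lemma mem_face_iff_of_mem_polytope (hx : x ∈ polytope η κ) :
    x ∈ face η κ I ↔ ∀ j ∈ I, dotp (η j) x = κ j :=
  mem_iInter₂.trans (forall₂_congr fun _ _ => and_iff_right hx)

lemma mem_face_iff (hI : I.Nonempty) :
    x ∈ face η κ I ↔ x ∈ polytope η κ ∧ ∀ j ∈ I, dotp (η j) x = κ j := by
  obtain ⟨j, hj⟩ := hI
  refine ⟨fun hx => ?_, fun hx => (mem_face_iff_of_mem_polytope hx.1).2 hx.2⟩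
  have hxP : x ∈ polytope η κ := (mem_iInter₂.1 hx j hj).1
  exact ⟨hxP, (mem_face_iff_of_mem_polytope hxP).1 hx⟩

lemma mem_face_activeSet (hx : x ∈ polytope η κ) : x ∈ face η κ (activeSet η κ x) :=
  (mem_face_iff_of_mem_polytope hx).2 fun _ => mem_activeSet.1

lemma face_pair (i j : Fin N) : face η κ {j, i} = facet η κ i ∩ facet η κ j := by
  rw [face, Finset.set_biInter_insert, Finset.set_biInter_singleton, inter_comm]

lemma isSimplePoly_iff :
    IsSimplePoly η κ ↔ ∀ I : Finset (Fin N), (face η κ I).Nonempty → LinearIndepOn ℝ η I := by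
  refine ⟨fun h I ⟨x, hx⟩ => ?_, fun h x hx => ?_⟩
  · obtain rfl | hI := I.eq_empty_or_nonempty
    · simp
    · obtain ⟨hxP, hxI⟩ := (mem_face_iff hI).1 hx
      exact LinearIndepOn.mono (h x hxP) hxI
  · have hli : LinearIndepOn ℝ η (activeSet η κ x) := h _ ⟨x, mem_face_activeSet hx⟩
    exact hli.mono fun _ => mem_activeSet.2

lemma IsSimplePoly.of_analogous (h : IsSimplePoly η κ) (hκ : Analogous η κ κ') :
    IsSimplePoly η κ' :=
  isSimplePoly_iff.2 fun I hI => isSimplePoly_iff.1 h I ((hκ I).1 hI)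

lemma isClosed_polytope : IsClosed (polytope η κ) := by
  simp only [polytope, ofPred_forall]
  exact isClosed_iInter fun l => isClosed_le (continuous_dotp _) continuous_const

lemma exists_dotp_pos (hb : Bornology.IsBounded (polytope η κ)) (hne : (polytope η κ).Nonempty)
    (he : e ≠ 0) : ∃ l, 0 < dotp (η l) e := by
  by_contra! hle
  obtain ⟨x, hx⟩ := hne
  obtain ⟨C, hC⟩ := Metric.isBounded_iff.1 hb
  have hC₀ : 0 ≤ C := dist_nonneg.trans (hC hx hx)
  have hray : x + ((C + 1) / ‖e‖) • e ∈ polytope η κ := fun l => by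
    rw [dotp_add, dotp_smul]
    have : (C + 1) / ‖e‖ * dotp (η l) e ≤ 0 :=
      mul_nonpos_of_nonneg_of_nonpos (by positivity) (hle l)
    linarith [hx l]
  have hdist := hC hx hray
  rw [dist_self_add_right, norm_smul, norm_div, norm_norm,
    div_mul_cancel₀ _ (norm_ne_zero_iff.2 he), Real.norm_of_nonneg (by positivity)] at hdist
  linarith

lemma isBounded_polytope_of_isBounded (hb : Bornology.IsBounded (polytope η κ))
    (hne : (polytope η κ).Nonempty) (κ' : Fin N → ℝ) : Bornology.IsBounded (polytope η κ') := by
  let f (x : Fin n → ℝ) : ℝ := ∑ l, max 0 (dotp (η l) x)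
  have hf : Continuous f := by fun_prop
  obtain ⟨δ, hδ, hδf⟩ : ∃ δ > 0, ∀ e ∈ Metric.sphere (0 : Fin n → ℝ) 1, δ ≤ f e := by
    refine (isCompact_sphere 0 1).exists_forall_le' hf.continuousOn fun e he => ?_
    obtain ⟨l, hl⟩ := exists_dotp_pos hb hne (ne_zero_of_mem_unit_sphere ⟨e, he⟩)
    exact Finset.sum_pos' (fun _ _ => le_max_left _ _) ⟨l, Finset.mem_univ l, lt_max_of_lt_right hl⟩
  have hfx (x : Fin n → ℝ) : ‖x‖ * δ ≤ f x := by
    obtain rfl | hx := eq_or_ne x 0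
    · simp [f, dotp_zero]
    have hunit : ‖x‖⁻¹ • x ∈ Metric.sphere (0 : Fin n → ℝ) 1 := by
      simp [norm_smul, hx]
    calc ‖x‖ * δ ≤ ‖x‖ * f (‖x‖⁻¹ • x) := by gcongr; exact hδf _ hunit
      _ = f x := by
        simp only [f, Finset.mul_sum, mul_max_of_nonneg _ _ (norm_nonneg x), dotp_smul, mul_zero,
          mul_inv_cancel_left₀ (norm_ne_zero_iff.2 hx)]
  refine isBounded_iff_forall_norm_le.2 ⟨(∑ l, max 0 (κ' l)) / δ, fun x hx => ?_⟩
  rw [le_div_iff₀ hδ]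
  exact (hfx x).trans (Finset.sum_le_sum fun l _ => max_le_max_left 0 (hx l))

lemma exists_ray_exit (hx : x ∈ polytope η κ) (he : ∃ l, 0 < dotp (η l) e) :
    ∃ τ : ℝ, 0 ≤ τ ∧ x + τ • e ∈ polytope η κ ∧
      ∃ b, 0 < dotp (η b) e ∧ dotp (η b) (x + τ • e) = κ b := by
  obtain ⟨b, hb, hmin⟩ := Set.exists_min_image {l | 0 < dotp (η l) e}
    (fun l => (κ l - dotp (η l) x) / dotp (η l) e) (toFinite _) he
  refine ⟨(κ b - dotp (η b) x) / dotp (η b) e, div_nonneg (sub_nonneg.2 (hx b)) hb.le,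
    fun l => ?_, b, hb, ?_⟩
  · rw [dotp_add, dotp_smul, ← le_sub_iff_add_le']
    obtain hl | hl := lt_or_ge 0 (dotp (η l) e)
    · exact (le_div_iff₀ hl).1 (hmin l hl)
    · exact (mul_nonpos_of_nonneg_of_nonpos (div_nonneg (sub_nonneg.2 (hx b)) hb.le) hl).trans
        (sub_nonneg.2 (hx l))
  · rw [dotp_add, dotp_smul, div_mul_cancel₀ _ hb.ne', add_sub_cancel]

/-- The points satisfying, with support numbers `γ`, the inequalities of the facets of `Δ(κ)`
that meet the face `F_I` without containing it. Along the affine span of `F_I` these are the only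
inequalities that matter. -/
def link (η : Fin N → Fin n → ℝ) (κ : Fin N → ℝ) (I : Finset (Fin N)) (γ : Fin N → ℝ) :
    Set (Fin n → ℝ) :=
  {x | ∀ l ∉ I, (face η κ (insert l I)).Nonempty → dotp (η l) x ≤ γ l}

lemma Analogous.mem_polytope_iff_mem_link (h : Analogous η κ κ') (hI : I.Nonempty)
    (hF : (face η κ I).Nonempty) (hx : ∀ j ∈ I, dotp (η j) x = κ' j) :
    x ∈ polytope η κ' ↔ x ∈ link η κ I κ' := by
  refine ⟨fun hxP l _ _ => hxP l, fun hlink => ?_⟩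
  by_contra! hxP
  obtain ⟨l, hl⟩ : ∃ l, κ' l < dotp (η l) x := by simpa [polytope] using hxP
  obtain ⟨y, hy⟩ := (h I).2 hF
  obtain ⟨hyP, hyI⟩ := (mem_face_iff hI).1 hy
  have hle : 0 < dotp (η l) (x - y) := by linarith [dotp_sub (η l) x y, hyP l]
  -- The segment from `y` to `x` leaves the polytope strictly before `x`.
  obtain ⟨τ, -, hz, b, hbe, hb⟩ := exists_ray_exit hyP ⟨l, hle⟩
  have hzI (j) (hj : j ∈ I) : dotp (η j) (x - y) = 0 := by
    rw [dotp_sub, hx j hj, hyI j hj, sub_self]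
  have hbI : b ∉ I := fun hbI => hbe.ne' (hzI b hbI)
  have hzface : y + τ • (x - y) ∈ face η κ' (insert b I) := by
    refine (mem_face_iff_of_mem_polytope hz).2 (Finset.forall_mem_insert _ _ _ |>.2 ⟨hb, ?_⟩)
    intro j hj
    rw [dotp_add, dotp_smul, hzI j hj, mul_zero, add_zero, hyI j hj]
  have hbx : dotp (η b) x ≤ κ' b := hlink b hbI ((h _).1 ⟨_, hzface⟩)
  have hzl := hz l
  rw [dotp_add, dotp_smul] at hb hzl
  have hτ : τ < 1 := by nlinarith [dotp_sub (η l) x y]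
  nlinarith [dotp_sub (η b) x y]

/-- The polyhedron obtained from `Δ(κ)` by dropping the inequality of the facet `F_i`. -/
def polytopeErase (η : Fin N → Fin n → ℝ) (κ : Fin N → ℝ) (i : Fin N) : Set (Fin n → ℝ) :=
  {x | ∀ j ≠ i, dotp (η j) x ≤ κ j}

lemma mem_polytope_update {t : ℝ} :
    x ∈ polytope η (update κ i t) ↔ dotp (η i) x ≤ t ∧ x ∈ polytopeErase η κ i :=
  forall_update_iff κ fun j c => dotp (η j) x ≤ c

lemma volFn_update_sub_volFn_update {s t : ℝ} (hst : s ≤ t)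
    (hb : Bornology.IsBounded (polytope η (update κ i t))) :
    volFn η (update κ i t) - volFn η (update κ i s) =
      volume.real (polytopeErase η κ i ∩ dotp (η i) ⁻¹' Ioc s t) := by
  have hsub : polytope η (update κ i s) ⊆ polytope η (update κ i t) := fun x hx =>
    mem_polytope_update.2 ((mem_polytope_update.1 hx).imp_left hst.trans')
  have hset : polytopeErase η κ i ∩ dotp (η i) ⁻¹' Ioc s t =
      polytope η (update κ i t) \ polytope η (update κ i s) := by
    ext x
    simp only [mem_inter_iff, mem_sdiff, mem_polytope_update, mem_preimage, mem_Ioc, ← not_le]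
    tauto
  rw [hset, measureReal_sdiff hsub isClosed_polytope.measurableSet hb.measure_lt_top.ne]
  rfl

end Polytope

section Forward

variable {n N : ℕ} {η : Fin N → Fin n → ℝ} {κ : Fin N → ℝ} {i : Fin N}

/-- On the chamber of `κ`, the volume is affine-linear in the support number `κ i` while the other
support numbers are fixed. -/
def VolumeAffineIn (η : Fin N → Fin n → ℝ) (κ : Fin N → ℝ) (i : Fin N) : Prop :=
  ∀ κ' ∈ chamber η κ, ∃ a b : ℝ, ∀ t : ℝ,
    update κ' i t ∈ chamber η κ → volFn η (update κ' i t) = a * t + b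

lemma analogous_of_mem_chamber {κ' : Fin N → ℝ} (h : κ' ∈ chamber η κ) : Analogous η κ κ' :=
  (connectedComponentIn_subset _ _ h).2

lemma FlatFacet.exists_dotp_eq_one (h : FlatFacet η κ i)
    (hb : Bornology.IsBounded (polytope η κ)) (hi : (facet η κ i).Nonempty) :
    ∃ ξ, dotp (η i) ξ = 1 ∧ ∀ j ≠ i, (face η κ {j, i}).Nonempty → dotp (η j) ξ = 0 := by
  obtain ⟨ξ, hξ₀, hξ⟩ := h
  simp only [← face_pair] at hξ
  have hξi : dotp (η i) ξ ≠ 0 := by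
    intro h₀
    obtain ⟨x, hx, hxi⟩ := hi
    obtain ⟨τ, -, hz, b, hbξ, hb⟩ := exists_ray_exit hx (exists_dotp_pos hb ⟨x, hx⟩ hξ₀)
    have hbi : b ≠ i := by
      rintro rfl
      exact hbξ.ne' h₀
    have hzi : dotp (η i) (x + τ • ξ) = κ i := by rw [dotp_add, dotp_smul, h₀, hxi]; ring
    refine hbξ.ne' (hξ b hbi ⟨x + τ • ξ, (mem_face_iff_of_mem_polytope hz).2 ?_⟩)
    simp [hb, hzi]
  refine ⟨(dotp (η i) ξ)⁻¹ • ξ, ?_, fun j hj hF => ?_⟩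
  · rw [dotp_smul, inv_mul_cancel₀ hξi]
  · rw [dotp_smul, hξ j hj hF, mul_zero]

lemma add_smul_mem_link {I : Finset (Fin N)} {γ : Fin N → ℝ} {x ξ : Fin n → ℝ} {c : ℝ} :
    x + c • ξ ∈ link η κ I γ ↔ x ∈ link η κ I (γ - fun l => c * dotp (η l) ξ) := by
  refine forall₃_congr fun l _ _ => ?_
  rw [dotp_add, dotp_smul, Pi.sub_apply, le_sub_iff_add_le]

lemma add_smul_mem_link_of_dotp_eq_zero {I : Finset (Fin N)} {γ : Fin N → ℝ} {ξ : Fin n → ℝ}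
    (hξ : ∀ l ∉ I, (face η κ (insert l I)).Nonempty → dotp (η l) ξ = 0) (x : Fin n → ℝ)
    (c : ℝ) :
    x + c • ξ ∈ link η κ I γ ↔ x ∈ link η κ I γ := by
  rw [add_smul_mem_link]
  refine forall₃_congr fun l hl hF => ?_
  rw [Pi.sub_apply, hξ l hl hF, mul_zero, sub_zero]

lemma link_singleton_update {γ : Fin N → ℝ} (t : ℝ) :
    link η κ {i} (update γ i t) = link η κ {i} γ := by
  ext x
  refine forall₃_congr fun l hl _ => ?_
  rw [update_of_ne (Finset.notMem_singleton.1 hl)]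

lemma polytopeErase_inter_preimage_Ioc_eq_link_inter {κ' : Fin N → ℝ} {ξ : Fin n → ℝ} {s t : ℝ}
    (hF : (facet η κ i).Nonempty) (hξi : dotp (η i) ξ = 1)
    (hξ : ∀ j ≠ i, (face η κ {j, i}).Nonempty → dotp (η j) ξ = 0)
    (hs : update κ' i s ∈ chamber η κ) (ht : update κ' i t ∈ chamber η κ) :
    polytopeErase η κ' i ∩ dotp (η i) ⁻¹' Ioc s t =
      link η κ {i} κ' ∩ dotp (η i) ⁻¹' Ioc s t := by
  have hF' : (face η κ {i}).Nonempty := by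
    rwa [face, Finset.set_biInter_singleton]
  have hslide {c : ℝ} (hc : update κ' i c ∈ chamber η κ) {x : Fin n → ℝ}
      (hx : x ∈ link η κ {i} κ') : x + (c - dotp (η i) x) • ξ ∈ polytopeErase η κ' i := by
    refine (mem_polytope_update (t := c)).1 ?_ |>.2
    rw [(analogous_of_mem_chamber hc).mem_polytope_iff_mem_link (Finset.singleton_nonempty i) hF',
      link_singleton_update, add_smul_mem_link_of_dotp_eq_zero
        fun j hj => hξ j (Finset.notMem_singleton.1 hj)]
    · exact hx
    · simp [dotp_add, dotp_smul, hξi]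
  refine Subset.antisymm (inter_subset_inter_left _ fun x hx j hj _ => ?_) ?_
  · exact hx j (Finset.notMem_singleton.1 hj)
  rintro x ⟨hx, hsx, hxt⟩
  refine ⟨fun j hj => ?_, hsx, hxt⟩
  -- `x` lies on the segment between its slides to the levels `s` and `t` of `η i`.
  have hjs := hslide hs hx j hj
  have hjt := hslide ht hx j hj
  rw [dotp_add, dotp_smul] at hjs hjt
  obtain hjξ | hjξ := le_total 0 (dotp (η j) ξ)
  · nlinarith
  · nlinarith

theorem FlatFacet.volumeAffineIn (h : FlatFacet η κ i)
    (hb : Bornology.IsBounded (polytope η κ)) (hi : (facet η κ i).Nonempty) :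
    VolumeAffineIn η κ i := by
  intro κ' hκ'
  obtain ⟨ξ, hξi, hξ⟩ := h.exists_dotp_eq_one hb hi
  have hvol {s t : ℝ} (hst : s ≤ t) (hs : update κ' i s ∈ chamber η κ)
      (ht : update κ' i t ∈ chamber η κ) :
      volFn η (update κ' i t) - volFn η (update κ' i s) =
        (t - s) * volume.real (link η κ {i} κ' ∩ dotp (η i) ⁻¹' Ioc 0 1) := by
    rw [volFn_update_sub_volFn_update hst
        (isBounded_polytope_of_isBounded hb (hi.mono (sep_subset _ _)) _),
      polytopeErase_inter_preimage_Ioc_eq_link_inter hi hξi hξ hs ht]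
    exact measureReal_inter_preimage_Ioc volume (φ := dotProductEquiv ℝ (Fin n) (η i)) hξi
      (add_smul_mem_link_of_dotp_eq_zero fun j hj => hξ j (Finset.notMem_singleton.1 hj)) hst
  have hself : update κ' i (κ' i) ∈ chamber η κ := by rwa [update_eq_self]
  refine ⟨volume.real (link η κ {i} κ' ∩ dotp (η i) ⁻¹' Ioc 0 1), volFn η (update κ' i (κ' i)) -
    volume.real (link η κ {i} κ' ∩ dotp (η i) ⁻¹' Ioc 0 1) * κ' i, fun t ht => ?_⟩
  obtain hle | hle := le_total (κ' i) t
  · linarith [hvol hle hself ht]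
  · linarith [hvol hle ht hself]

end Forward

section Chamber

variable {n N : ℕ} {η : Fin N → Fin n → ℝ} {κ : Fin N → ℝ} {I : Finset (Fin N)}

lemma eventually_face_nonempty (h : IsSimplePoly η κ) (hF : (face η κ I).Nonempty) :
    ∀ᶠ κ' in 𝓝 κ, (face η κ' I).Nonempty := by
  obtain rfl | hI := I.eq_empty_or_nonempty
  · simp [face]
  obtain ⟨x, hx⟩ := hF
  obtain ⟨hxP, hxI⟩ := (mem_face_iff hI).1 hx
  obtain ⟨L, hL⟩ := exists_linearMap_dotp_eq
    (isSimplePoly_iff.1 h _ ⟨x, mem_face_activeSet hxP⟩)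
  -- Moving `x` by `L (κ' - κ)` keeps every facet through `x` active.
  have hactive (κ') {l} (hl : l ∈ activeSet η κ x) : dotp (η l) (x + L (κ' - κ)) = κ' l := by
    rw [dotp_add, hL _ l hl, mem_activeSet.1 hl, Pi.sub_apply, add_sub_cancel]
  have hcont : Continuous fun κ' => x + L (κ' - κ) := by
    have := L.continuous_of_finiteDimensional
    fun_prop
  have hinactive : ∀ᶠ κ' in 𝓝 κ, ∀ l ∉ activeSet η κ x, dotp (η l) (x + L (κ' - κ)) < κ' l := by
    refine Filter.eventually_all.2 fun l => Filter.eventually_imp_distrib_left.2 fun hl => ?_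
    refine ((continuous_dotp _).comp hcont).continuousAt.eventually_lt
      (continuous_apply l).continuousAt ?_
    simpa using (hxP l).lt_of_ne (mem_activeSet.not.1 hl)
  filter_upwards [hinactive] with κ' hκ'
  refine ⟨x + L (κ' - κ), (mem_face_iff hI).2 ⟨fun l => ?_, fun l hl => ?_⟩⟩
  · by_cases hl : l ∈ activeSet η κ x
    · exact (hactive κ' hl).le
    · exact (hκ' l hl).le
  · exact hactive κ' (mem_activeSet.2 (hxI l hl))

lemma isClosed_mem_face : IsClosed {p : (Fin N → ℝ) × (Fin n → ℝ) | p.2 ∈ face η p.1 I} := by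
  simp only [face, facet, polytope, mem_iInter, mem_ofPred_eq]
  simp only [ofPred_forall, ofPred_and]
  refine isClosed_biInter fun i _ => .inter (isClosed_iInter fun l => ?_) ?_
  · exact isClosed_le (by fun_prop) (by fun_prop)
  · exact isClosed_eq (by fun_prop) (by fun_prop)

lemma eventually_not_face_nonempty (hb : Bornology.IsBounded (polytope η κ))
    (hne : (polytope η κ).Nonempty) (hF : ¬ (face η κ I).Nonempty) :
    ∀ᶠ κ' in 𝓝 κ, ¬ (face η κ' I).Nonempty := by
  have hI : I.Nonempty := by
    rw [Finset.nonempty_iff_ne_empty]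
    rintro rfl
    simp [face] at hF
  have hcompact : IsCompact (polytope η (κ + 1)) :=
    Metric.isCompact_of_isClosed_isBounded isClosed_polytope
      (isBounded_polytope_of_isBounded hb hne _)
  have hnotMem : ∀ᶠ κ' in 𝓝 κ, ∀ x ∈ polytope η (κ + 1), x ∉ face η κ' I := by
    refine hcompact.eventually_forall_of_forall_eventually fun x _ => ?_
    exact isClosed_mem_face.isOpen_compl.mem_nhds fun hx => hF ⟨x, hx⟩
  have hle : ∀ᶠ κ' in 𝓝 κ, κ' ≤ κ + 1 :=
    Filter.eventually_all.2 fun l =>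
      (continuous_apply l).continuousAt.eventually_le_const (lt_add_one (κ l))
  filter_upwards [hnotMem, hle] with κ' hκ' hle
  rintro ⟨x, hx⟩
  exact hκ' x (fun l => (((mem_face_iff hI).1 hx).1 l).trans (hle l)) hx

lemma chamber_mem_nhds (h : IsSimplePoly η κ) (hb : Bornology.IsBounded (polytope η κ))
    (hne : (polytope η κ).Nonempty) : chamber η κ ∈ 𝓝 κ := by
  have hanalogous : ∀ᶠ κ' in 𝓝 κ, Analogous η κ κ' := by
    refine Filter.eventually_all.2 fun I => ?_
    by_cases hF : (face η κ I).Nonempty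
    · filter_upwards [eventually_face_nonempty h hF] with κ' hκ' using iff_of_true hκ' hF
    · filter_upwards [eventually_not_face_nonempty hb hne hF] with κ' hκ' using iff_of_false hκ' hF
  apply connectedComponentIn_mem_nhds
  filter_upwards [hanalogous] with κ' hκ' using ⟨h.of_analogous hκ', hκ'⟩

lemma exists_Icc_subset_chamber (h : IsSimplePoly η κ) (hb : Bornology.IsBounded (polytope η κ))
    (hne : (polytope η κ).Nonempty) : ∃ ε > 0, Icc κ (fun j => κ j + 2 * ε) ⊆ chamber η κ := by
  obtain ⟨r, hr, hball⟩ := Metric.nhds_basis_closedBall.mem_iff.1 (chamber_mem_nhds h hb hne)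
  refine ⟨r / 2, half_pos hr, fun κ' hκ' => hball ((dist_pi_le_iff hr.le).2 fun j => ?_)⟩
  rw [Real.dist_eq, abs_of_nonneg (sub_nonneg.2 (hκ'.1 j))]
  linarith [hκ'.2 j]

end Chamber

section Box

variable {n N : ℕ} {η : Fin N → Fin n → ℝ} {κ : Fin N → ℝ} {I : Finset (Fin N)} {i : Fin N}
  {ε : ℝ}

/-- The points at which every `η j` with `j ∈ I` takes a value in `(a j, a j + ε]`. -/
def box (η : Fin N → Fin n → ℝ) (I : Finset (Fin N)) (a : Fin N → ℝ) (ε : ℝ) :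
    Set (Fin n → ℝ) :=
  {x | ∀ j ∈ I, dotp (η j) x ∈ Ioc (a j) (a j + ε)}

lemma add_smul_mem_box {a : Fin N → ℝ} {x ξ : Fin n → ℝ} {c : ℝ} :
    x + c • ξ ∈ box η I a ε ↔ x ∈ box η I (a - fun j => c * dotp (η j) ξ) ε := by
  refine forall₂_congr fun j _ => ?_
  rw [dotp_add, dotp_smul, add_mem_Ioc_iff_left, add_sub_right_comm, Pi.sub_apply]

lemma mem_link_iff_of_analogous_piecewise {x : Fin n → ℝ}
    (h : Analogous η κ (I.piecewise (fun j => dotp (η j) x) κ)) (hI : I.Nonempty)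
    (hF : (face η κ I).Nonempty) :
    x ∈ link η κ I κ ↔ ∀ l ∉ I, dotp (η l) x ≤ κ l := by
  have hpolytope : x ∈ polytope η (I.piecewise (fun j => dotp (η j) x) κ) ↔
      ∀ l ∉ I, dotp (η l) x ≤ κ l := by
    refine forall_congr' fun l => ?_
    by_cases hl : l ∈ I <;> simp [hl]
  rw [← hpolytope, h.mem_polytope_iff_mem_link hI hF fun j hj => by simp [hj]]
  refine forall₃_congr fun l hl _ => ?_
  rw [I.piecewise_eq_of_notMem _ _ hl]

lemma update_mem_chamber {κ' : Fin N → ℝ} {t : ℝ}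
    (hκ : Icc κ (fun j => κ j + 2 * ε) ⊆ chamber η κ) (hκ' : κ' ∈ Icc κ fun j => κ j + 2 * ε)
    (ht : t ∈ Icc (κ i) (κ i + 2 * ε)) : update κ' i t ∈ chamber η κ :=
  hκ ⟨le_update_iff.2 ⟨ht.1, fun j _ => hκ'.1 j⟩, update_le_iff.2 ⟨ht.2, fun j _ => hκ'.2 j⟩⟩

lemma VolumeAffineIn.measureReal_polytopeErase_inter_eq (h : VolumeAffineIn η κ i)
    (hb : ∀ κ', Bornology.IsBounded (polytope η κ')) {κ' : Fin N → ℝ} {r s t : ℝ}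
    (hrs : r ≤ s) (hst : s - r = t - s) (hr : update κ' i r ∈ chamber η κ)
    (hs : update κ' i s ∈ chamber η κ) (ht : update κ' i t ∈ chamber η κ) :
    volume.real (polytopeErase η κ' i ∩ dotp (η i) ⁻¹' Ioc r s) =
      volume.real (polytopeErase η κ' i ∩ dotp (η i) ⁻¹' Ioc s t) := by
  obtain ⟨a, b, hab⟩ := h _ hr
  simp only [update_idem] at hab
  rw [← volFn_update_sub_volFn_update hrs (hb _),
    ← volFn_update_sub_volFn_update (by linarith) (hb _), hab r hr, hab s hs, hab t ht]
  linear_combination a * hst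

lemma piecewise_mem_Icc_of_mem_box {s : ℝ} (hε : 0 ≤ ε) (hs : s ∈ Icc (κ i) (κ i + ε))
    {x : Fin n → ℝ} (hx : x ∈ box η I (update κ i s) ε) :
    I.piecewise (fun j => dotp (η j) x) κ ∈ Icc κ fun j => κ j + 2 * ε := by
  suffices ∀ j, I.piecewise (fun j => dotp (η j) x) κ j ∈ Icc (κ j) (κ j + 2 * ε) from
    ⟨fun j => (this j).1, fun j => (this j).2⟩
  intro j
  by_cases hj : j ∈ I
  · obtain ⟨hlt, hle⟩ := hx j hj
    rw [I.piecewise_eq_of_mem _ _ hj]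
    obtain rfl | hji := eq_or_ne j i
    · rw [update_self] at hlt hle
      constructor <;> linarith [hs.1, hs.2]
    · rw [update_of_ne hji] at hlt hle
      constructor <;> linarith
  · rw [I.piecewise_eq_of_notMem _ _ hj]
    constructor <;> linarith

lemma box_inter_link_eq {s : ℝ} (hκ : Icc κ (fun j => κ j + 2 * ε) ⊆ chamber η κ) (hε : 0 ≤ ε)
    (hi : i ∈ I) (hF : (face η κ I).Nonempty) (hs : s ∈ Icc (κ i) (κ i + ε)) :
    box η I (update κ i s) ε ∩ link η κ I κ =
      {x | ∀ j ∈ I.erase i, dotp (η j) x ∈ Ioc (κ j) (κ j + ε)} ∩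
        ({x | ∀ l ∉ I, dotp (η l) x ≤ κ l} ∩ dotp (η i) ⁻¹' Ioc s (s + ε)) := by
  have hlink : ∀ x ∈ box η I (update κ i s) ε,
      (x ∈ link η κ I κ ↔ ∀ l ∉ I, dotp (η l) x ≤ κ l) := fun x hx =>
    mem_link_iff_of_analogous_piecewise
      (analogous_of_mem_chamber (hκ (piecewise_mem_Icc_of_mem_box hε hs hx))) ⟨i, hi⟩ hF
  have hbox : box η I (update κ i s) ε =
      {x | ∀ j ∈ I.erase i, dotp (η j) x ∈ Ioc (κ j) (κ j + ε)} ∩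
        dotp (η i) ⁻¹' Ioc s (s + ε) := by
    rw [inter_comm, ← I.insert_erase hi]
    ext x
    simp only [box, mem_ofPred_eq, Finset.forall_mem_insert, update_self, mem_inter_iff,
      Finset.erase_insert (I.notMem_erase i), mem_preimage]
    refine and_congr_right fun _ => forall₂_congr fun j hj => ?_
    rw [update_of_ne (Finset.ne_of_mem_erase hj)]
  ext x
  rw [mem_inter_iff, and_congr_right (hlink x), hbox]
  simp only [mem_inter_iff, mem_ofPred_eq]
  tauto

lemma mem_polytopeErase_piecewise {c : Fin N → ℝ} {x : Fin n → ℝ} (hi : i ∈ I) :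
    x ∈ polytopeErase η (I.piecewise c κ) i ↔
      (∀ j ∈ I.erase i, dotp (η j) x ≤ c j) ∧ ∀ l ∉ I, dotp (η l) x ≤ κ l := by
  refine ⟨fun hx => ⟨fun j hj => ?_, fun l hl => ?_⟩, fun ⟨hc, hκ⟩ j hj => ?_⟩
  · simpa [Finset.mem_of_mem_erase hj] using hx j (Finset.ne_of_mem_erase hj)
  · simpa [hl] using hx l (ne_of_mem_of_not_mem hi hl).symm
  · by_cases hjI : j ∈ I
    · simpa [hjI] using hc j (Finset.mem_erase.2 ⟨hj, hjI⟩)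
    · simpa [hjI] using hκ j hjI

lemma VolumeAffineIn.measureReal_box_inter_link_eq (h : VolumeAffineIn η κ i)
    (hb : ∀ κ', Bornology.IsBounded (polytope η κ'))
    (hκ : Icc κ (fun j => κ j + 2 * ε) ⊆ chamber η κ) (hε : 0 ≤ ε) (hi : i ∈ I)
    (hF : (face η κ I).Nonempty) :
    volume.real (box η I κ ε ∩ link η κ I κ) =
      volume.real (box η I (update κ i (κ i + ε)) ε ∩ link η κ I κ) := by
  let T (s : ℝ) : Set (Fin n → ℝ) :=
    {x | ∀ l ∉ I, dotp (η l) x ≤ κ l} ∩ dotp (η i) ⁻¹' Ioc s (s + ε)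
  have hT (s : ℝ) : MeasurableSet (T s) := by
    have hdotp (l) : Measurable (dotp (η l)) := (continuous_dotp _).measurable
    refine .inter ?_ (hdotp i measurableSet_Ioc)
    simp only [ofPred_forall]
    exact .iInter fun l => .iInter fun _ => measurableSet_le (hdotp l) measurable_const
  have hinter (c : Fin N → ℝ) (s : ℝ) : {x | ∀ j ∈ I.erase i, dotp (η j) x ≤ c j} ∩ T s =
      polytopeErase η (I.piecewise c κ) i ∩ dotp (η i) ⁻¹' Ioc s (s + ε) := by
    ext x
    simp only [T, mem_inter_iff, mem_ofPred_eq, mem_polytopeErase_piecewise hi, and_assoc]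
  have hfin (s : ℝ) :
      volume.restrict (T s) {x | ∀ j ∈ I.erase i, dotp (η j) x ≤ κ j + ε} ≠ ⊤ := by
    rw [Measure.restrict_apply' (hT s), hinter fun j => κ j + ε]
    refine ((hb (update (I.piecewise (fun j => κ j + ε) κ) i (s + ε))).subset ?_).measure_lt_top.ne
    exact fun x hx => mem_polytope_update.2 ⟨hx.2.2, hx.1⟩
  have hshift := measureReal_forall_mem_Ioc_eq (μ := volume.restrict (T (κ i)))
    (ν := volume.restrict (T (κ i + ε))) (f := fun j => dotp (η j))
    (fun j => (continuous_dotp _).measurable) (a := κ) (b := fun j => κ j + ε)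
    (fun j => le_add_of_nonneg_right hε) (hfin _) (hfin _) fun c hc => by
      have hc' : I.piecewise c κ ∈ Icc κ fun j => κ j + 2 * ε := by
        refine I.piecewise_mem_Icc_of_mem_of_mem ⟨hc.1, fun j => ?_⟩ ⟨le_rfl, fun j => ?_⟩
        · linarith [hc.2 j]
        · linarith
      rw [measureReal_restrict_apply' (hT _), measureReal_restrict_apply' (hT _), hinter, hinter]
      refine h.measureReal_polytopeErase_inter_eq hb (le_add_of_nonneg_right hε) (by ring)
        ?_ ?_ ?_ <;> refine update_mem_chamber hκ hc' ⟨?_, ?_⟩ <;> linarith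
  rw [measureReal_restrict_apply' (hT _), measureReal_restrict_apply' (hT _)] at hshift
  have hbox := box_inter_link_eq hκ hε hi hF (left_mem_Icc.2 (le_add_of_nonneg_right hε))
  rw [update_eq_self] at hbox
  rw [hbox, box_inter_link_eq hκ hε hi hF (right_mem_Icc.2 (le_add_of_nonneg_right hε)), hshift]

lemma box_inter_link_subset_polytope {s : ℝ} (hκ : Icc κ (fun j => κ j + 2 * ε) ⊆ chamber η κ)
    (hε : 0 ≤ ε) (hi : i ∈ I) (hF : (face η κ I).Nonempty) (hs : s ∈ Icc (κ i) (κ i + ε)) :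
    box η I (update κ i s) ε ∩ link η κ I κ ⊆ polytope η fun j => κ j + 2 * ε := by
  intro x hx
  rw [box_inter_link_eq hκ hε hi hF hs] at hx
  obtain ⟨hxI, hxlink, hxi⟩ := hx
  intro l
  obtain rfl | hli := eq_or_ne l i
  · linarith [hxi.2, hs.2]
  by_cases hl : l ∈ I
  · linarith [(hxI l (Finset.mem_erase.2 ⟨hli, hl⟩)).2]
  · linarith [hxlink l hl]

lemma exists_dotp_mem_Ioo (h : IsSimplePoly η κ) {b : Fin N} (hbI : b ∉ I)
    (hF : (face η κ (insert b I)).Nonempty) (hε : 0 < ε) {r t : ℝ} (hr : r ≤ κ b) (ht : κ b ≤ t)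
    (hrt : r < t) :
    ∃ x, (∀ j ∈ I, dotp (η j) x ∈ Ioo (κ j) (κ j + ε)) ∧ dotp (η b) x ∈ Ioo r t ∧
      ∀ l ∉ I, l ≠ b → dotp (η l) x < κ l := by
  obtain ⟨w, hw⟩ := hF
  obtain ⟨hwP, hwI⟩ := (mem_face_iff (Finset.insert_nonempty b I)).1 hw
  obtain ⟨hwb, hwI⟩ := (Finset.forall_mem_insert _ _ _).1 hwI
  obtain ⟨L, hL⟩ := exists_linearMap_dotp_eq
    (isSimplePoly_iff.1 h _ ⟨w, mem_face_activeSet hwP⟩)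
  let y := L (update (I.piecewise 1 (-1)) b ((r + t) / 2 - κ b))
  have hyb : dotp (η b) y = (r + t) / 2 - κ b := by rw [hL _ b (mem_activeSet.2 hwb), update_self]
  have hyI {j} (hj : j ∈ I) : dotp (η j) y = 1 := by
    rw [hL _ j (mem_activeSet.2 (hwI j hj)), update_of_ne (ne_of_mem_of_not_mem hj hbI),
      I.piecewise_eq_of_mem _ _ hj, Pi.one_apply]
  have hyl {l} (hlI : l ∉ I) (hlb : l ≠ b) (hl : dotp (η l) w = κ l) : dotp (η l) y = -1 := by
    rw [hL _ l (mem_activeSet.2 hl), update_of_ne hlb, I.piecewise_eq_of_notMem _ _ hlI,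
      Pi.neg_apply, Pi.one_apply]
  have hline (l) : Continuous fun s : ℝ => dotp (η l) (w + s • y) := by fun_prop
  have hinactive : ∀ᶠ s in 𝓝[>] (0 : ℝ), ∀ l ∉ I, l ≠ b → dotp (η l) (w + s • y) < κ l := by
    refine Filter.eventually_all.2 fun l => ?_
    obtain hl | hl := (hwP l).eq_or_lt
    · filter_upwards [self_mem_nhdsWithin] with s hs hlI hlb
      rw [dotp_add, dotp_smul, hyl hlI hlb hl, hl]
      linarith [mem_Ioi.1 hs]
    · have hlt : ∀ᶠ s in 𝓝 (0 : ℝ), dotp (η l) (w + s • y) < κ l :=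
        (hline l).continuousAt.eventually_lt continuousAt_const (by simpa using hl)
      filter_upwards [nhdsWithin_le_nhds hlt] with s hs _ _ using hs
  obtain ⟨s, hs, hs₀, hsε⟩ :=
    (hinactive.and (Ioo_mem_nhdsGT (lt_min hε one_pos))).exists
  obtain ⟨hsε, hs₁⟩ := lt_min_iff.1 hsε
  refine ⟨w + s • y, fun j hj => ?_, ?_, hs⟩
  · rw [dotp_add, dotp_smul, hyI hj, hwI j hj]
    constructor <;> linarith
  · rw [dotp_add, dotp_smul, hyb, hwb]
    have hst : 0 < s * (t - r) := mul_pos hs₀ (sub_pos.2 hrt)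
    have hsr : 0 ≤ (1 - s) * (κ b - r) := mul_nonneg (sub_nonneg.2 hs₁.le) (sub_nonneg.2 hr)
    have hst' : 0 ≤ (1 - s) * (t - κ b) := mul_nonneg (sub_nonneg.2 hs₁.le) (sub_nonneg.2 ht)
    constructor <;> linarith

lemma measureReal_box_inter_link_lt (h : IsSimplePoly η κ) {α β : Fin N → ℝ}
    (hα : ∀ l ∉ I, (face η κ (insert l I)).Nonempty → α l ≤ κ l)
    (hβ : ∀ l ∉ I, (face η κ (insert l I)).Nonempty → κ l ≤ β l) {b : Fin N} (hbI : b ∉ I)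
    (hF : (face η κ (insert b I)).Nonempty) (hαβ : α b < β b) (hε : 0 < ε)
    (hfin : volume (box η I κ ε ∩ link η κ I β) ≠ ⊤) :
    volume.real (box η I κ ε ∩ link η κ I α) < volume.real (box η I κ ε ∩ link η κ I β) := by
  obtain ⟨x, hxI, hxb, hxl⟩ := exists_dotp_mem_Ioo h hbI hF hε (hα b hbI hF) (hβ b hbI hF) hαβ
  have hsub : link η κ I α ⊆ link η κ I β := fun y hy l hl hlF =>
    (hy l hl hlF).trans ((hα l hl hlF).trans (hβ l hl hlF))
  refine measureReal_lt_of_sdiff_mem_nhds (x := x) (inter_subset_inter_right _ hsub) ?_ hfin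
  have hbox : ∀ᶠ y in 𝓝 x, ∀ j ∈ I, dotp (η j) y ∈ Ioo (κ j) (κ j + ε) :=
    (Filter.eventually_all_finset I).2 fun j hj =>
      (continuous_dotp _).continuousAt.eventually_mem (isOpen_Ioo.mem_nhds (hxI j hj))
  have hlink : ∀ᶠ y in 𝓝 x, ∀ l ∉ I, l ≠ b → dotp (η l) y < κ l := by
    refine Filter.eventually_all.2 fun l => ?_
    simp only [Filter.eventually_imp_distrib_left]
    exact fun hl hlb => (continuous_dotp _).continuousAt.eventually_lt continuousAt_const
      (hxl l hl hlb)
  have hb : ∀ᶠ y in 𝓝 x, dotp (η b) y ∈ Ioo (α b) (β b) :=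
    (continuous_dotp _).continuousAt.eventually_mem (isOpen_Ioo.mem_nhds hxb)
  filter_upwards [hbox, hlink, hb] with y hyI hyl hyb
  refine ⟨⟨fun j hj => Ioo_subset_Ioc_self (hyI j hj), fun l hl hlF => ?_⟩, fun hy => ?_⟩
  · obtain rfl | hlb := eq_or_ne l b
    · exact hyb.2.le
    · exact (hyl l hl hlb).le.trans (hβ l hl hlF)
  · exact hyb.1.not_ge (hy.2 b hbI hF)

lemma volume_box_inter_link_update {ξ : Fin n → ℝ}
    (hξ : ∀ j ∈ I, dotp (η j) ξ = (Pi.single i 1 : Fin N → ℝ) j) :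
    volume (box η I (update κ i (κ i + ε)) ε ∩ link η κ I κ) =
      volume (box η I κ ε ∩ link η κ I (κ - fun l => ε * dotp (η l) ξ)) := by
  rw [← measure_preimage_add_right volume (ε • ξ)]
  congr 1
  ext x
  rw [mem_preimage, mem_inter_iff, add_smul_mem_box, add_smul_mem_link]
  refine and_congr_left fun _ => forall₂_congr fun j hj => ?_
  suffices (update κ i (κ i + ε) - fun j => ε * dotp (η j) ξ) j = κ j by rw [this]
  rw [Pi.sub_apply, hξ j hj]
  obtain rfl | hji := eq_or_ne j i
  · simp
  · simp [hji]

theorem VolumeAffineIn.dotp_eq_zero (h : VolumeAffineIn η κ i) (hsimple : IsSimplePoly η κ)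
    (hb : Bornology.IsBounded (polytope η κ)) (hi : i ∈ I) {ξ : Fin n → ℝ}
    (hξ : ∀ j ∈ I, dotp (η j) ξ = (Pi.single i 1 : Fin N → ℝ) j)
    (hsign : (∀ l ∉ I, (face η κ (insert l I)).Nonempty → 0 ≤ dotp (η l) ξ) ∨
      ∀ l ∉ I, (face η κ (insert l I)).Nonempty → dotp (η l) ξ ≤ 0)
    {b : Fin N} (hbI : b ∉ I) (hF : (face η κ (insert b I)).Nonempty) : dotp (η b) ξ = 0 := by
  have hI : I.Nonempty := ⟨i, hi⟩
  have hFI : (face η κ I).Nonempty :=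
    hF.mono (biInter_subset_biInter_left (Finset.subset_insert b I))
  have hne : (polytope η κ).Nonempty := hFI.mono fun x hx => ((mem_face_iff hI).1 hx).1
  have hb' := isBounded_polytope_of_isBounded hb hne
  obtain ⟨ε, hε, hκ⟩ := exists_Icc_subset_chamber hsimple hb hne
  have hfin {s} (hs : s ∈ Icc (κ i) (κ i + ε)) :
      volume (box η I (update κ i s) ε ∩ link η κ I κ) ≠ ⊤ :=
    ((hb' _).subset (box_inter_link_subset_polytope hκ hε.le hi hFI hs)).measure_lt_top.ne
  have hfin₀ := hfin (left_mem_Icc.2 (le_add_of_nonneg_right hε.le))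
  have hfin₁ := hfin (right_mem_Icc.2 (le_add_of_nonneg_right hε.le))
  have hvol := h.measureReal_box_inter_link_eq hb' hκ hε.le hi hFI
  rw [update_eq_self] at hfin₀
  rw [volume_box_inter_link_update hξ] at hfin₁
  rw [measureReal_def, measureReal_def, volume_box_inter_link_update hξ] at hvol
  by_contra hbξ
  obtain hpos | hneg := hsign
  · refine (measureReal_box_inter_link_lt hsimple (fun l hl hlF => ?_) (fun _ _ _ => le_rfl)
      hbI hF ?_ hε hfin₀).ne' hvol
    · exact sub_le_self _ (mul_nonneg hε.le (hpos l hl hlF))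
    · exact sub_lt_self _ (mul_pos hε ((hpos b hbI hF).lt_of_ne' hbξ))
  · refine (measureReal_box_inter_link_lt hsimple (fun _ _ _ => le_rfl) (fun l hl hlF => ?_)
      hbI hF ?_ hε hfin₁).ne hvol
    · rw [Pi.sub_apply]
      linarith [mul_nonpos_of_nonneg_of_nonpos hε.le (hneg l hl hlF)]
    · rw [Pi.sub_apply]
      linarith [mul_neg_of_pos_of_neg hε ((hneg b hbI hF).lt_of_ne hbξ)]

end Box

section Vertex

variable {n N : ℕ} {η : Fin N → Fin n → ℝ} {κ : Fin N → ℝ} {i k : Fin N} {v e : Fin n → ℝ}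

/-- Vertices of a simple polytope: the points lying on exactly `n` facets. -/
def IsVertex (η : Fin N → Fin n → ℝ) (κ : Fin N → ℝ) (v : Fin n → ℝ) : Prop :=
  v ∈ polytope η κ ∧ #(activeSet η κ v) = n

lemma IsSimplePoly.linearIndepOn_activeSet (h : IsSimplePoly η κ) (hv : v ∈ polytope η κ) :
    LinearIndepOn ℝ η (activeSet η κ v) :=
  isSimplePoly_iff.1 h _ ⟨v, mem_face_activeSet hv⟩

lemma IsVertex.eq_zero (hv : IsVertex η κ v) (h : IsSimplePoly η κ) {x : Fin n → ℝ}
    (hx : ∀ j ∈ activeSet η κ v, dotp (η j) x = 0) : x = 0 :=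
  (card_eq_iff_forall_dotp_eq_zero (h.linearIndepOn_activeSet hv.1)).1 hv.2 x hx

lemma exists_isVertex_mem_facet (h : IsSimplePoly η κ) (hb : Bornology.IsBounded (polytope η κ))
    (hi : (facet η κ i).Nonempty) : ∃ v ∈ facet η κ i, IsVertex η κ v := by
  obtain ⟨v, hv, hmax⟩ :=
    Set.Finite.exists_maximalFor' (activeSet η κ) (facet η κ i) (toFinite _) hi
  refine ⟨v, hv, hv.1, (card_eq_iff_forall_dotp_eq_zero (h.linearIndepOn_activeSet hv.1)).2 ?_⟩
  intro x hx
  by_contra hx₀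
  obtain ⟨τ, -, hw, b, hbx, hbw⟩ := exists_ray_exit hv.1 (exists_dotp_pos hb ⟨v, hv.1⟩ hx₀)
  have hsub : activeSet η κ v ⊆ activeSet η κ (v + τ • x) := fun l hl =>
    mem_activeSet.2 (by rw [dotp_add, dotp_smul, hx l hl, mul_zero, add_zero, mem_activeSet.1 hl])
  have hwi : v + τ • x ∈ facet η κ i := ⟨hw, mem_activeSet.1 (hsub (mem_activeSet.2 hv.2))⟩
  exact hbx.ne' (hx b (hmax hwi hsub (mem_activeSet.2 hbw)))

lemma finite_ofPred_isVertex (h : IsSimplePoly η κ) : {v | IsVertex η κ v}.Finite := by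
  refine Finite.of_finite_image (f := activeSet η κ) (toFinite _) fun v hv w _ hvw => ?_
  refine sub_eq_zero.1 (hv.eq_zero h fun j hj => ?_)
  rw [dotp_sub, mem_activeSet.1 hj, mem_activeSet.1 (hvw ▸ hj), sub_self]

/-- `e` points from `v` along the edge that leaves the facet `F_k` and stays on the other facets
through `v`. It is normalised to decrease `η k` at unit speed. -/
def IsEdgeDirection (η : Fin N → Fin n → ℝ) (κ : Fin N → ℝ) (v : Fin n → ℝ) (k : Fin N)
    (e : Fin n → ℝ) : Prop :=
  dotp (η k) e = -1 ∧ ∀ j ∈ (activeSet η κ v).erase k, dotp (η j) e = 0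

-- The tangent cone at a vertex of a simple polytope is spanned by its `n` edge directions.
lemma IsVertex.exists_isEdgeDirection_dotp_pos (hv : IsVertex η κ v) (h : IsSimplePoly η κ)
    {y : Fin n → ℝ} (hy : y ∈ polytope η κ) {u : Fin n → ℝ} (hu : dotp u v < dotp u y) :
    ∃ k ∈ activeSet η κ v, dotp (η k) y < κ k ∧
      ∃ e, IsEdgeDirection η κ v k e ∧ 0 < dotp u e := by
  obtain ⟨L, hL⟩ := exists_linearMap_dotp_eq (h.linearIndepOn_activeSet hv.1)
  let e (k : Fin N) : Fin n → ℝ := L (Pi.single k (-1))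
  have he (k) {j} (hj : j ∈ activeSet η κ v) :
      dotp (η j) (e k) = (Pi.single k (-1) : Fin N → ℝ) j := hL _ j hj
  have hcone : y - v = ∑ k ∈ activeSet η κ v, (κ k - dotp (η k) y) • e k := by
    refine sub_eq_zero.1 (hv.eq_zero h fun j hj => ?_)
    simp [dotp_sub, dotp_sum, dotp_smul, he _ hj, mem_activeSet.1 hj, Pi.single_apply, hj]
  have hsum : 0 < ∑ k ∈ activeSet η κ v, (κ k - dotp (η k) y) * dotp u (e k) := by
    simp only [← dotp_smul, ← dotp_sum, ← hcone, dotp_sub, sub_pos, hu]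
  obtain ⟨k, hk, hpos⟩ := Finset.exists_lt_of_sum_lt
    (Finset.sum_const_zero.trans_lt hsum)
  have hky : 0 < κ k - dotp (η k) y :=
    (sub_nonneg.2 (hy k)).lt_of_ne' (left_ne_zero_of_mul hpos.ne')
  refine ⟨k, hk, sub_pos.1 hky, e k, ⟨?_, fun j hj => ?_⟩, (pos_iff_pos_of_mul_pos hpos).1 hky⟩
  · rw [he k hk, Pi.single_eq_same]
  · rw [he k (Finset.mem_of_mem_erase hj), Pi.single_eq_of_ne (Finset.ne_of_mem_erase hj)]

lemma IsEdgeDirection.dotp_nonpos (he : IsEdgeDirection η κ v k e) {j : Fin N}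
    (hj : j ∈ activeSet η κ v) : dotp (η j) e ≤ 0 := by
  obtain rfl | hjk := eq_or_ne j k
  · rw [he.1]
    exact neg_one_lt_zero.le
  · exact (he.2 j (Finset.mem_erase.2 ⟨hjk, hj⟩)).le

lemma IsEdgeDirection.exists_adjacent_isVertex (he : IsEdgeDirection η κ v k e)
    (hv : IsVertex η κ v) (hk : k ∈ activeSet η κ v) (h : IsSimplePoly η κ)
    (hb : Bornology.IsBounded (polytope η κ)) :
    ∃ τ > (0 : ℝ), ∃ b ∉ activeSet η κ v, 0 < dotp (η b) e ∧ IsVertex η κ (v + τ • e) ∧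
      activeSet η κ (v + τ • e) = insert b ((activeSet η κ v).erase k) := by
  have he₀ : e ≠ 0 := by
    rintro rfl
    simpa [dotp_zero] using he.1
  obtain ⟨τ, hτ, hw, b, hbe, hbw⟩ := exists_ray_exit hv.1 (exists_dotp_pos hb ⟨v, hv.1⟩ he₀)
  have hbv : b ∉ activeSet η κ v := fun hbv => hbe.not_ge (he.dotp_nonpos hbv)
  have hτ₀ : τ ≠ 0 := by
    rintro rfl
    rw [zero_smul, add_zero] at hbw
    exact hbv (mem_activeSet.2 hbw)
  have hsub : insert b ((activeSet η κ v).erase k) ⊆ activeSet η κ (v + τ • e) := by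
    refine Finset.insert_subset (mem_activeSet.2 hbw) fun j hj => mem_activeSet.2 ?_
    rw [dotp_add, dotp_smul, he.2 j hj, mul_zero, add_zero,
      mem_activeSet.1 (Finset.mem_of_mem_erase hj)]
  have hcard : #(insert b ((activeSet η κ v).erase k)) = n := by
    rw [Finset.card_insert_of_notMem fun hbK => hbv (Finset.mem_of_mem_erase hbK),
      Finset.card_erase_add_one hk, hv.2]
  have hactive := Finset.eq_of_subset_of_card_le hsub
    ((card_le_of_linearIndepOn (h.linearIndepOn_activeSet hw)).trans_eq hcard.symm)
  exact ⟨τ, hτ.lt_of_ne' hτ₀, b, hbv, hbe, ⟨hw, hactive ▸ hcard⟩, hactive.symm⟩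

lemma IsEdgeDirection.eq_add_smul (he : IsEdgeDirection η κ v k e) (hv : IsVertex η κ v)
    (h : IsSimplePoly η κ) {y : Fin n → ℝ}
    (hy : ∀ j ∈ (activeSet η κ v).erase k, dotp (η j) y = κ j) :
    y = v + (dotp (η k) v - dotp (η k) y) • e := by
  refine sub_eq_zero.1 (hv.eq_zero h fun j hj => ?_)
  rw [dotp_sub, dotp_add, dotp_smul]
  obtain rfl | hjk := eq_or_ne j k
  · rw [he.1]
    ring
  · have hjK := Finset.mem_erase.2 ⟨hjk, hj⟩
    rw [he.2 j hjK, hy j hjK, mem_activeSet.1 hj]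
    ring

lemma IsEdgeDirection.eq_or_eq_of_face_insert_nonempty (he : IsEdgeDirection η κ v k e)
    (hv : IsVertex η κ v) (hk : k ∈ activeSet η κ v) (h : IsSimplePoly η κ) {τ : ℝ} {b : Fin N}
    (hbe : 0 < dotp (η b) e) (hw : v + τ • e ∈ polytope η κ)
    (hactive : activeSet η κ (v + τ • e) = insert b ((activeSet η κ v).erase k)) {l : Fin N}
    (hl : l ∉ (activeSet η κ v).erase k)
    (hF : (face η κ (insert l ((activeSet η κ v).erase k))).Nonempty) : l = k ∨ l = b := by
  by_contra! hne
  obtain ⟨hlk, hlb⟩ := hne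
  obtain ⟨y, hy⟩ := hF
  obtain ⟨hyP, hyI⟩ := (mem_face_iff (Finset.insert_nonempty _ _)).1 hy
  obtain ⟨hyl, hyK⟩ := (Finset.forall_mem_insert _ _ _).1 hyI
  obtain ⟨z, hz, rfl⟩ : ∃ z, 0 ≤ z ∧ y = v + z • e :=
    ⟨_, sub_nonneg.2 ((hyP k).trans_eq (mem_activeSet.1 hk).symm), he.eq_add_smul hv h hyK⟩
  have hbw : dotp (η b) (v + τ • e) = κ b :=
    mem_activeSet.1 (hactive ▸ Finset.mem_insert_self _ _)
  have hlv : dotp (η l) v < κ l := (hv.1 l).lt_of_ne fun hlv =>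
    hl (Finset.mem_erase.2 ⟨hlk, mem_activeSet.2 hlv⟩)
  have hlw : dotp (η l) (v + τ • e) < κ l := (hw l).lt_of_ne fun hlw =>
    (Finset.mem_insert.1 (hactive ▸ mem_activeSet.2 hlw)).elim hlb hl
  have hzb := hyP b
  rw [dotp_add, dotp_smul] at hyl hbw hlw hzb
  have hzτ : z ≤ τ := le_of_mul_le_mul_right (by linarith) hbe
  obtain hle | hle := le_total 0 (dotp (η l) e)
  · linarith [mul_le_mul_of_nonneg_right hzτ hle]
  · linarith [mul_nonpos_of_nonneg_of_nonpos hz hle]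

end Vertex

section Backward

variable {n N : ℕ} {η : Fin N → Fin n → ℝ} {κ : Fin N → ℝ} {i k : Fin N} {v e ξ : Fin n → ℝ}

lemma VolumeAffineIn.exists_adjacent_isVertex (h : VolumeAffineIn η κ i)
    (hsimple : IsSimplePoly η κ) (hb : Bornology.IsBounded (polytope η κ)) (hv : IsVertex η κ v)
    (hi : i ∈ activeSet η κ v)
    (hξ : ∀ j ∈ activeSet η κ v, dotp (η j) ξ = (Pi.single i 1 : Fin N → ℝ) j)
    (hk : k ∈ activeSet η κ v) (hki : k ≠ i) (he : IsEdgeDirection η κ v k e) :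
    ∃ τ > (0 : ℝ), IsVertex η κ (v + τ • e) ∧ i ∈ activeSet η κ (v + τ • e) ∧
      ∀ j ∈ activeSet η κ (v + τ • e), dotp (η j) ξ = (Pi.single i 1 : Fin N → ℝ) j := by
  obtain ⟨τ, hτ, b, hbv, hbe, hw, hactive⟩ := he.exists_adjacent_isVertex hv hk hsimple hb
  have hiK : i ∈ (activeSet η κ v).erase k := Finset.mem_erase.2 ⟨hki.symm, hi⟩
  have hξK : ∀ j ∈ (activeSet η κ v).erase k, dotp (η j) ξ = (Pi.single i 1 : Fin N → ℝ) j :=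
    fun j hj => hξ j (Finset.mem_of_mem_erase hj)
  have hξk : dotp (η k) ξ = 0 := by rw [hξ k hk, Pi.single_eq_of_ne hki]
  -- The edge meets only the facets `k` and `b`, and `η k` vanishes at `ξ`.
  have hξb : dotp (η b) ξ = 0 := by
    have hends {l} := he.eq_or_eq_of_face_insert_nonempty (l := l) hv hk hsimple hbe hw.1 hactive
    refine h.dotp_eq_zero hsimple hb hiK hξK ?_ (fun hbK => hbv (Finset.mem_of_mem_erase hbK))
      ⟨v + τ • e, hactive ▸ mem_face_activeSet hw.1⟩
    refine (le_total 0 (dotp (η b) ξ)).imp (fun hle l hl hF => ?_) fun hle l hl hF => ?_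
    · obtain rfl | rfl := hends hl hF
      exacts [hξk.ge, hle]
    · obtain rfl | rfl := hends hl hF
      exacts [hξk.le, hle]
  refine ⟨τ, hτ, hw, ?_⟩
  rw [hactive]
  refine ⟨Finset.mem_insert_of_mem hiK, (Finset.forall_mem_insert _ _ _).2 ⟨?_, hξK⟩⟩
  rw [hξb, Pi.single_eq_of_ne (ne_of_mem_of_not_mem hi hbv).symm]

theorem VolumeAffineIn.flatFacet (h : VolumeAffineIn η κ i) (hsimple : IsSimplePoly η κ)
    (hb : Bornology.IsBounded (polytope η κ)) (hi : (facet η κ i).Nonempty) :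
    FlatFacet η κ i := by
  obtain ⟨v₀, hv₀i, hv₀⟩ := exists_isVertex_mem_facet hsimple hb hi
  obtain ⟨L, hL⟩ := exists_linearMap_dotp_eq (hsimple.linearIndepOn_activeSet hv₀.1)
  let ξ := L (Pi.single i 1)
  let S : Set (Fin n → ℝ) := {v | IsVertex η κ v ∧ i ∈ activeSet η κ v ∧
    ∀ j ∈ activeSet η κ v, dotp (η j) ξ = (Pi.single i 1 : Fin N → ℝ) j}
  have hv₀S : v₀ ∈ S := ⟨hv₀, mem_activeSet.2 hv₀i.2, hL _⟩
  have hS : S.Finite := (finite_ofPred_isVertex hsimple).subset fun v hv => hv.1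
  refine ⟨ξ, fun hξ₀ => ?_, fun b hbi ⟨y, hyi, hyb⟩ => ?_⟩
  · simpa [hξ₀, dotp_zero] using hv₀S.2.2 i hv₀S.2.1
  obtain ⟨v, ⟨hv, hvi, hvξ⟩, hmax⟩ := exists_max_image S (dotp (η b)) hS ⟨v₀, hv₀S⟩
  suffices hbv : dotp (η b) v = κ b by
    rw [hvξ b (mem_activeSet.2 hbv), Pi.single_eq_of_ne hbi]
  by_contra hbv
  have hvy : dotp (η b) v < dotp (η b) y := ((hv.1 b).lt_of_ne hbv).trans_eq hyb.2.symm
  obtain ⟨k, hk, hky, e, he, hbe⟩ := hv.exists_isEdgeDirection_dotp_pos hsimple hyb.1 hvy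
  have hki : k ≠ i := by
    rintro rfl
    exact hky.ne hyi.2
  obtain ⟨τ, hτ, hwS⟩ := h.exists_adjacent_isVertex hsimple hb hv hvi hvξ hk hki he
  have hle := hmax _ hwS
  rw [dotp_add, dotp_smul] at hle
  linarith [mul_pos hτ hbe]

end Backward

end MassLinearPaper

/-- A facet is flat iff the volume is an affine-linear function of its support number. -/
theorem stmt8 {n N : ℕ} (η : Fin N → Fin n → ℝ) (κ : Fin N → ℝ)
    (hΔ : GoodPolytope η κ) (i : Fin N) :
    FlatFacet η κ i ↔
      ∀ κ' ∈ chamber η κ, ∃ a b : ℝ, ∀ t : ℝ,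
        Function.update κ' i t ∈ chamber η κ →
          volFn η (Function.update κ' i t) = a * t + b := by
  obtain ⟨hsimple, hb, -, hne⟩ := hΔ
  exact ⟨fun h => h.volumeAffineIn hb (hne i),
    fun h => VolumeAffineIn.flatFacet h hsimple hb (hne i)⟩
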